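/- arXiv:1808.08454 — 12 statements merged into one kernel-verified Lean document; each statement's English description precedes it below -/
import Mathlib

section
/- Let c ≠ 0 be a real number, Γ : ℝ → ℝ² a smooth curve with [Γ(t), Γ'(t)] = 1 for all t, and p : ℝ → ℝ a smooth function with Γ''(t) = p(t)Γ(t) for all t. Let a : ℝ → ℝ be smooth and set Δ(t) := a(t)Γ(t) + cΓ'(t). Then [Δ(t), Δ'(t)] = 1 for all t if and only if a satisfies the Riccati equation a'(t) = (a(t)² − 1)/c − c·p(t) for all t. -/
/-!
By the Hill equation, `Δ' = (a' + c p) Γ + a Γ'`. Expanding the determinant bilinearly in the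
frame `(Γ, Γ')`, which has determinant `1`, gives `[Δ, Δ'] = a² - c (a' + c p)`. Since `c ≠ 0`,
this equals `1` exactly when the Riccati equation holds, pointwise in `t`.
-/

open Real

/-- The determinant of the 2×2 matrix with columns `u`, `v` in `ℝ²`. -/
def det2 (u v : ℝ × ℝ) : ℝ := u.1 * v.2 - u.2 * v.1

/-- For `Δ = aΓ + cΓ'`, the curve `Δ` is centro-affine (`[Δ, Δ'] = 1`) iff `a`
satisfies the Riccati equation `a' = (a² − 1)/c − c p`. -/
theorem delta_centroaffine_iff_riccati (c : ℝ) (hc : c ≠ 0)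
    (Γ : ℝ → ℝ × ℝ) (hΓ : ContDiff ℝ (⊤ : ℕ∞) Γ)
    (hdet : ∀ t, det2 (Γ t) (deriv Γ t) = 1)
    (p : ℝ → ℝ) (hp : ContDiff ℝ (⊤ : ℕ∞) p)
    (hHill : ∀ t, deriv (deriv Γ) t = p t • Γ t)
    (a : ℝ → ℝ) (ha : ContDiff ℝ (⊤ : ℕ∞) a)
    (Δ : ℝ → ℝ × ℝ) (hΔ : ∀ t, Δ t = a t • Γ t + c • deriv Γ t) :
    (∀ t, det2 (Δ t) (deriv Δ t) = 1) ↔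
      (∀ t, deriv a t = (a t ^ 2 - 1) / c - c * p t) := by
  have hΓd : Differentiable ℝ Γ := hΓ.differentiable (by simp)
  have hΓ'd : Differentiable ℝ (deriv Γ) :=
    ((contDiff_infty_iff_deriv.mp hΓ).2).differentiable (by simp)
  have had : Differentiable ℝ a := ha.differentiable (by simp)
  have hΔ' : ∀ t, deriv Δ t = (deriv a t + c * p t) • Γ t + a t • deriv Γ t := by
    intro t
    have h : HasDerivAt (fun s => a s • Γ s + c • deriv Γ s)
        ((a t • deriv Γ t + deriv a t • Γ t) + c • deriv (deriv Γ) t) t :=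
      ((had t).hasDerivAt.smul (hΓd t).hasDerivAt).add ((hΓ'd t).hasDerivAt.const_smul c)
    rw [funext hΔ, h.deriv, hHill t]
    module
  have key : ∀ t, det2 (Δ t) (deriv Δ t) = a t ^ 2 - c * (deriv a t + c * p t) := by
    intro t
    have hd := hdet t
    rw [hΔ', hΔ]
    simp only [det2, Prod.fst_add, Prod.snd_add, Prod.smul_fst, Prod.smul_snd,
      smul_eq_mul] at hd ⊢
    linear_combination (a t ^ 2 - c * (deriv a t + c * p t)) * hd
  refine forall_congr' fun t => ?_
  rw [key, eq_sub_iff_add_eq, eq_div_iff hc]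
  constructor <;> intro h <;> linear_combination -h
end

section
/- Let Γ : ℝ → ℝ² be a smooth curve with [Γ(t), Γ'(t)] = 1 for all t, and let h, f : ℝ → ℝ be smooth functions. Set v(t) := h(t)Γ(t) + f(t)Γ'(t). Then [Γ(t), v'(t)] = [Γ'(t), v(t)] for all t if and only if h(t) = −f'(t)/2 for all t. -/
/-!
Differentiating `[Γ, Γ'] = 1` gives `[Γ, Γ''] = 0`. For `v = hΓ + fΓ'`, bilinearity then yields
`[Γ, v'] = h + f'` and `[Γ', v] = -h`, so `[Γ, v'] - [Γ', v] = 2h + f'` pointwise, which vanishes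
exactly when `h = -f'/2`.
-/

open Real

/-- For a variation `v = hΓ + fΓ'` of a centro-affine curve `Γ`, the linearized
constraint `[Γ, v'] = [Γ', v]` holds iff `h = −f'/2`. -/
theorem tangent_vector_characterization (Γ : ℝ → ℝ × ℝ) (hΓ : ContDiff ℝ (⊤ : ℕ∞) Γ)
    (hdet : ∀ t, det2 (Γ t) (deriv Γ t) = 1)
    (h f : ℝ → ℝ) (hh : ContDiff ℝ (⊤ : ℕ∞) h) (hf : ContDiff ℝ (⊤ : ℕ∞) f)
    (v : ℝ → ℝ × ℝ) (hv : ∀ t, v t = h t • Γ t + f t • deriv Γ t) :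
    (∀ t, det2 (Γ t) (deriv v t) = det2 (deriv Γ t) (v t)) ↔
      (∀ t, h t = -(deriv f t) / 2) := by
  have hΓ1 : ∀ t, HasDerivAt Γ (deriv Γ t) t := fun t =>
    (hΓ.differentiable (by simp) t).hasDerivAt
  have hΓ2 : ∀ t, HasDerivAt (deriv Γ) (deriv (deriv Γ) t) t := fun t =>
    (((contDiff_infty_iff_deriv.mp hΓ).2).differentiable (by simp) t).hasDerivAt
  have hh1 : ∀ t, HasDerivAt h (deriv h t) t := fun t =>
    (hh.differentiable (by simp) t).hasDerivAt
  have hf1 : ∀ t, HasDerivAt f (deriv f t) t := fun t =>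
    (hf.differentiable (by simp) t).hasDerivAt
  have hv1 : ∀ t, deriv v t = (h t • deriv Γ t + deriv h t • Γ t) +
      (f t • deriv (deriv Γ) t + deriv f t • deriv Γ t) := fun t => by
    rw [funext hv]
    exact (((hh1 t).smul (hΓ1 t)).add ((hf1 t).smul (hΓ2 t))).deriv
  -- Differentiating `[Γ, Γ'] = 1`; the term `[Γ', Γ']` vanishes.
  have hdet2 : ∀ t, det2 (Γ t) (deriv (deriv Γ) t) = 0 := fun t => by
    have hfst : ∀ {g : ℝ → ℝ × ℝ} {dg : ℝ × ℝ}, HasDerivAt g dg t →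
        HasDerivAt (fun s => (g s).1) dg.1 t := fun hg => by
      simpa using (HasFDerivAt.fst hg.hasFDerivAt).hasDerivAt
    have hsnd : ∀ {g : ℝ → ℝ × ℝ} {dg : ℝ × ℝ}, HasDerivAt g dg t →
        HasDerivAt (fun s => (g s).2) dg.2 t := fun hg => by
      simpa using (HasFDerivAt.snd hg.hasFDerivAt).hasDerivAt
    have hd := ((hfst (hΓ1 t)).mul (hsnd (hΓ2 t))).sub ((hsnd (hΓ1 t)).mul (hfst (hΓ2 t)))
    have hc : HasDerivAt (fun s => det2 (Γ s) (deriv Γ s)) 0 t := by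
      rw [funext hdet]
      exact hasDerivAt_const t 1
    have := hd.unique hc
    unfold det2
    linear_combination this
  have key : ∀ t, det2 (Γ t) (deriv v t) - det2 (deriv Γ t) (v t) =
      2 * h t + deriv f t := fun t => by
    have h1 := hdet t
    have h2 := hdet2 t
    rw [hv1, hv]
    simp only [det2, Prod.fst_add, Prod.snd_add, Prod.smul_fst, Prod.smul_snd,
      smul_eq_mul] at h1 h2 ⊢
    linear_combination (2 * h t + deriv f t) * h1 + f t * h2
  refine forall_congr' fun t => ?_
  have := key t
  constructor <;> intro _ <;> linarith
end

section
/- Let f : ℝ → ℝ be a smooth π-periodic function. Then ∫₀^π (f(t)g'(t) − f'(t)g(t)) dt = 0 for every smooth π-periodic function g : ℝ → ℝ if and only if f is constant. (Equivalently: the kernel of the pre-symplectic form ω(U_f, V_g) = ½∫₀^π (fg' − f'g) dt consists exactly of the constant functions f.) -/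
/-!
If `f` is in the kernel, test it against `g = f'`. Since `(f f')' = f f'' + f'^2` and `f f'` is
`π`-periodic, the pairing equals `-2 ∫₀^π f'^2`, so the continuous function `f'` vanishes on
`[0, π]`, hence everywhere by periodicity. Conversely, for constant `f = C` the pairing
is `C (g(π) - g(0)) = 0`.
-/

open Real

/-- The kernel of Pinkall's pre-symplectic form `ω(U_f, V_g) = ½∫₀^π (fg' − f'g) dt`
consists exactly of the constant functions: a smooth `π`-periodic `f` pairs to zero
with every smooth `π`-periodic `g` iff `f` is constant. -/
theorem omega_kernel (f : ℝ → ℝ) (hf : ContDiff ℝ (⊤ : ℕ∞) f)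
    (hfper : ∀ t, f (t + π) = f t) :
    (∀ g : ℝ → ℝ, ContDiff ℝ (⊤ : ℕ∞) g → (∀ t, g (t + π) = g t) →
      ∫ t in (0:ℝ)..π, (f t * deriv g t - deriv f t * g t) = 0) ↔
    (∃ C : ℝ, ∀ t, f t = C) := by
  have hd : Differentiable ℝ f := hf.differentiable (by simp)
  have hf' : ContDiff ℝ (⊤ : ℕ∞) (deriv f) := (contDiff_infty_iff_deriv.1 hf).2
  have hd' : Differentiable ℝ (deriv f) := hf'.differentiable (by simp)
  have hc'' : Continuous (deriv (deriv f)) := hf'.continuous_deriv (by simp)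
  have hper' : ∀ t, deriv f (t + π) = deriv f t := fun t => by
    rw [← deriv_comp_add_const, funext hfper]
  constructor
  · intro H
    have h0 := H (deriv f) hf' hper'
    have hparts : ∫ t in (0:ℝ)..π, (deriv f t * deriv f t + f t * deriv (deriv f) t) = 0 := by
      rw [intervalIntegral.integral_eq_sub_of_hasDerivAt (f := fun t => f t * deriv f t)
        (fun t _ => (hd t).hasDerivAt.mul (hd' t).hasDerivAt)
        (((hd'.continuous.mul hd'.continuous).add
          (hd.continuous.mul hc'')).intervalIntegrable _ _)]
      have h1 := hfper 0
      have h2 := hper' 0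
      rw [zero_add] at h1 h2
      simp [h1, h2]
    have hsq : ∫ t in (0:ℝ)..π, 2 * (deriv f t * deriv f t) = 0 := by
      have h := intervalIntegral.integral_sub (μ := MeasureTheory.volume)
        (((hd'.continuous.mul hd'.continuous).add
          (hd.continuous.mul hc'')).intervalIntegrable 0 π)
        (((hd.continuous.mul hc'').sub
          (hd'.continuous.mul hd'.continuous)).intervalIntegrable 0 π)
      simp only [Pi.add_apply, Pi.sub_apply, Pi.mul_apply] at h
      rw [hparts, h0, sub_zero] at h
      rw [← h]
      congr 1
      ext t
      ring
    have hz : ∀ t, deriv f t = 0 := by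
      intro t
      obtain ⟨c, hc, hct⟩ := Function.Periodic.exists_mem_Ico₀ (f := deriv f) hper' pi_pos t
      rw [hct]
      by_contra hne
      have hpos : 0 < ∫ t in (0:ℝ)..π, 2 * (deriv f t * deriv f t) :=
        intervalIntegral.integral_pos pi_pos
          (continuous_const.mul (hd'.continuous.mul hd'.continuous)).continuousOn
          (fun x _ => mul_nonneg zero_le_two (mul_self_nonneg _))
          ⟨c, ⟨hc.1, hc.2.le⟩, mul_pos two_pos (mul_self_pos.2 hne)⟩
      exact hpos.ne' hsq
    exact ⟨f 0, fun t => is_const_of_deriv_eq_zero hd hz t 0⟩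
  · rintro ⟨C, hC⟩ g hg hgper
    obtain rfl : f = fun _ => C := funext hC
    have hgd : Differentiable ℝ g := hg.differentiable (by simp)
    have h1 := hgper 0
    rw [zero_add] at h1
    simp only [deriv_const, zero_mul, sub_zero, intervalIntegral.integral_const_mul]
    rw [intervalIntegral.integral_deriv_eq_sub (fun t _ => hgd t)
      ((hg.continuous_deriv (by simp)).intervalIntegrable _ _), h1, sub_self, mul_zero]
end

section
/- Let Γ : ℝ × ℝ → ℝ² and p : ℝ × ℝ → ℝ be smooth, where Γ = Γ(s, t) and all primes denote t-derivatives. Suppose that for all (s, t): [Γ, ∂ₜΓ] = 1, ∂ₜ²Γ = p·Γ, and ∂ₛΓ = −½(∂ₜp)·Γ + p·∂ₜΓ. Then p satisfies the Korteweg–de Vries equation: ∂ₛp = −½∂ₜ³p + 3p·∂ₜp for all (s, t). -/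
/-!
The equation is the compatibility condition `∂ₛ∂ₜ²Γ = ∂ₜ²∂ₛΓ` of the Hill equation with the flow.
By the Hill equation the left side is `(∂ₛp) Γ + p ∂ₛΓ`, and differentiating the flow equation twice
in `t`, replacing `∂ₜ²Γ` by `pΓ`, turns the right side into
`(-½ ∂ₜ³p + 5/2 p ∂ₜp) Γ + p² ∂ₜΓ`. The `∂ₜΓ` terms cancel, and what remains is the KdV
equation multiplied by `Γ`, which vanishes nowhere because `[Γ, ∂ₜΓ] = 1`. The analytic input is
`deriv_comm_of_contDiff`, the symmetry of mixed partial derivatives in curried form.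
-/

open Real

section Partial

variable {E : Type*} [NormedAddCommGroup E] [NormedSpace ℝ E] {f : ℝ → ℝ → E}

lemma hasDerivAt_snd (hf : ContDiff ℝ (⊤ : ℕ∞) (fun q : ℝ × ℝ => f q.1 q.2)) (s t : ℝ) :
    HasDerivAt (f s) (fderiv ℝ (fun q : ℝ × ℝ => f q.1 q.2) (s, t) (0, 1)) t := by
  have h := (hf.differentiable (by simp) (s, t)).hasFDerivAt
  exact h.comp_hasDerivAt t ((hasDerivAt_const t s).prodMk (hasDerivAt_id t))

lemma hasDerivAt_fst (hf : ContDiff ℝ (⊤ : ℕ∞) (fun q : ℝ × ℝ => f q.1 q.2)) (s t : ℝ) :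
    HasDerivAt (fun s' => f s' t) (fderiv ℝ (fun q : ℝ × ℝ => f q.1 q.2) (s, t) (1, 0)) s := by
  have h := (hf.differentiable (by simp) (s, t)).hasFDerivAt
  exact h.comp_hasDerivAt s ((hasDerivAt_id s).prodMk (hasDerivAt_const s t))

lemma contDiff_fderiv_apply (hf : ContDiff ℝ (⊤ : ℕ∞) (fun q : ℝ × ℝ => f q.1 q.2)) (v : ℝ × ℝ) :
    ContDiff ℝ (⊤ : ℕ∞) (fun q : ℝ × ℝ => fderiv ℝ (fun q : ℝ × ℝ => f q.1 q.2) q v) :=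
  (hf.fderiv_right (m := (⊤ : ℕ∞)) (by simp)).clm_apply contDiff_const

lemma contDiff_deriv_snd (hf : ContDiff ℝ (⊤ : ℕ∞) (fun q : ℝ × ℝ => f q.1 q.2)) :
    ContDiff ℝ (⊤ : ℕ∞) (fun q : ℝ × ℝ => deriv (f q.1) q.2) := by
  simpa only [(hasDerivAt_snd hf _ _).deriv] using contDiff_fderiv_apply hf (0, 1)

lemma deriv_comm_of_contDiff (hf : ContDiff ℝ (⊤ : ℕ∞) (fun q : ℝ × ℝ => f q.1 q.2)) (s t : ℝ) :
    deriv (fun s' => deriv (f s') t) s = deriv (fun t' => deriv (fun s' => f s' t') s) t := by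
  have hsymm : IsSymmSndFDerivAt ℝ (fun q : ℝ × ℝ => f q.1 q.2) (s, t) :=
    hf.contDiffAt.isSymmSndFDerivAt (by
      simpa using WithTop.coe_le_coe.2 (le_top : (2 : ℕ∞) ≤ ⊤))
  have hd : DifferentiableAt ℝ (fderiv ℝ (fun q : ℝ × ℝ => f q.1 q.2)) (s, t) :=
    (hf.fderiv_right (m := (⊤ : ℕ∞)) (by simp)).differentiable (by simp) _
  simp only [(hasDerivAt_snd hf _ _).deriv, (hasDerivAt_fst hf _ _).deriv]
  have h1 := hasDerivAt_fst (f := fun a b => fderiv ℝ (fun q : ℝ × ℝ => f q.1 q.2) (a, b) (0, 1))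
    (contDiff_fderiv_apply hf (0, 1)) s t
  have h2 := hasDerivAt_snd (f := fun a b => fderiv ℝ (fun q : ℝ × ℝ => f q.1 q.2) (a, b) (1, 0))
    (contDiff_fderiv_apply hf (1, 0)) s t
  rw [h1.deriv, h2.deriv]
  simp only [Prod.mk.eta]
  rw [fderiv_clm_apply hd (by fun_prop), fderiv_clm_apply hd (by fun_prop)]
  simpa using hsymm (1, 0) (0, 1)

end Partial

/-- If a family of centro-affine curves `Γ(s, ·)` with Hill potentials `p(s, ·)`
evolves by Pinkall's Hamiltonian vector field `U_p = −½p'Γ + pΓ'`, then the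
potential `p` evolves by the Korteweg–de Vries equation
`∂ₛp = −½∂ₜ³p + 3p ∂ₜp`. -/
theorem kdv_evolution (Γ : ℝ → ℝ → ℝ × ℝ) (p : ℝ → ℝ → ℝ)
    (hΓ : ContDiff ℝ (⊤ : ℕ∞) (fun q : ℝ × ℝ => Γ q.1 q.2))
    (hp : ContDiff ℝ (⊤ : ℕ∞) (fun q : ℝ × ℝ => p q.1 q.2))
    (hdet : ∀ s t, det2 (Γ s t) (deriv (Γ s) t) = 1)
    (hHill : ∀ s t, deriv (deriv (Γ s)) t = p s t • Γ s t)
    (hflow : ∀ s t, deriv (fun s' => Γ s' t) s =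
      (-(1/2) * deriv (p s) t) • Γ s t + p s t • deriv (Γ s) t) :
    ∀ s t, deriv (fun s' => p s' t) s =
      -(1/2) * deriv (deriv (deriv (p s))) t + 3 * p s t * deriv (p s) t := by
  intro s t
  have dpt : ∀ t, HasDerivAt (p s) (deriv (p s) t) t := fun t =>
    (hasDerivAt_snd hp s t).differentiableAt.hasDerivAt
  have hp1 := contDiff_deriv_snd hp
  have dp1 : ∀ t, HasDerivAt (deriv (p s)) (deriv (deriv (p s)) t) t := fun t =>
    (hasDerivAt_snd (f := fun a => deriv (p a)) hp1 s t).differentiableAt.hasDerivAt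
  have dp2 : ∀ t, HasDerivAt (deriv (deriv (p s))) (deriv (deriv (deriv (p s))) t) t := fun t =>
    (hasDerivAt_snd (f := fun a => deriv (deriv (p a)))
      (contDiff_deriv_snd (f := fun a => deriv (p a)) hp1) s t).differentiableAt.hasDerivAt
  have hΓ1 := contDiff_deriv_snd hΓ
  have dΓ : ∀ t, HasDerivAt (Γ s) (deriv (Γ s) t) t := fun t =>
    (hasDerivAt_snd hΓ s t).differentiableAt.hasDerivAt
  have dΓ1 : ∀ t, HasDerivAt (deriv (Γ s)) (p s t • Γ s t) t := fun t => by
    rw [← hHill]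
    exact (hasDerivAt_snd (f := fun a => deriv (Γ a)) hΓ1 s t).differentiableAt.hasDerivAt
  -- `∂ₜ∂ₛΓ`, with `∂ₜ²Γ` eliminated
  have e1 : ∀ t, deriv (fun s' => deriv (Γ s') t) s =
      (-(1/2) * deriv (deriv (p s)) t + p s t ^ 2) • Γ s t
        + ((1/2) * deriv (p s) t) • deriv (Γ s) t := fun t => by
    rw [deriv_comm_of_contDiff hΓ]
    simp only [hflow]
    refine ((((dp1 t).const_mul (-(1/2))).smul (dΓ t)).add ((dpt t).smul (dΓ1 t))).deriv.trans ?_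
    module
  -- `∂ₜ²∂ₛΓ`
  have e2 : deriv (fun s' => deriv (deriv (Γ s')) t) s =
      (-(1/2) * deriv (deriv (deriv (p s))) t + (5/2) * p s t * deriv (p s) t) • Γ s t
        + (p s t ^ 2) • deriv (Γ s) t := by
    rw [deriv_comm_of_contDiff (f := fun a => deriv (Γ a)) hΓ1]
    simp only [e1]
    refine (((((dp2 t).const_mul (-(1/2))).add ((dpt t).pow 2)).smul (dΓ t)).add
      (((dp1 t).const_mul (1/2)).smul (dΓ1 t))).deriv.trans ?_
    simp only [Pi.add_apply, Pi.pow_apply]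
    module
  -- `∂ₛ(pΓ)`
  have e3 : deriv (fun s' => deriv (deriv (Γ s')) t) s =
      deriv (fun s' => p s' t) s • Γ s t
        + p s t • ((-(1/2) * deriv (p s) t) • Γ s t + p s t • deriv (Γ s) t) := by
    simp only [hHill]
    refine ((hasDerivAt_fst hp s t).differentiableAt.hasDerivAt.smul
      (hasDerivAt_fst hΓ s t).differentiableAt.hasDerivAt).deriv.trans ?_
    rw [hflow, add_comm]
  have hne : Γ s t ≠ 0 := fun h => by simpa [det2, h] using hdet s t
  refine smul_left_injective ℝ hne ?_
  have e := e3.symm.trans e2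
  rw [← sub_eq_zero] at e ⊢
  rw [← e]
  module
end

section
/- Let p : ℝ → ℝ be smooth and π-periodic, and let U : ℝ → ℝ² be smooth with U(t + π) = −U(t) for all t. Then ∫₀^π ([U'(t), V'(t)] + p(t)[U(t), V(t)]) dt = 0 for every smooth V : ℝ → ℝ² with V(t + π) = −V(t) for all t, if and only if U''(t) = p(t)U(t) for all t. (The kernel of Ω consists of the solutions of the Hill equation U'' = pU.) -/
/-!
Write `W = U'' - pU`, which is smooth and π-anti-periodic. Since
`[U', V]' = [U'', V] + [U', V']` and `[U', V]` is π-periodic, integrating by parts gives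
`Ω(U, V) = -∫₀^π [W, V] dt` (`Omega_eq_neg_integral`). Hence `W = 0` implies `Ω(U, ·) = 0`.
Conversely, no bump functions are needed: the rotated field `V = (-W₂, W₁)` is itself an admissible
test field, and `[W, V] = W₁² + W₂²`, a continuous nonnegative function which must vanish
if its integral over every period does.
-/

open Real

/-- The failure `U'' - pU` of `U` to solve the Hill equation with potential `p`. -/
noncomputable def hillDefect (p : ℝ → ℝ) (U : ℝ → ℝ × ℝ) (t : ℝ) : ℝ × ℝ :=
  deriv (deriv U) t - p t • U t

lemma deriv_antiperiodic {U : ℝ → ℝ × ℝ} (hUa : ∀ t, U (t + π) = -U t) (t : ℝ) :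
    deriv U (t + π) = -deriv U t := by
  rw [← deriv_comp_add_const, funext hUa, deriv.fun_neg]

lemma contDiff_deriv {U : ℝ → ℝ × ℝ} (hU : ContDiff ℝ (⊤ : ℕ∞) U) :
    ContDiff ℝ (⊤ : ℕ∞) (deriv U) :=
  (contDiff_infty_iff_deriv.1 hU).2

lemma contDiff_hillDefect {p : ℝ → ℝ} (hp : ContDiff ℝ (⊤ : ℕ∞) p)
    {U : ℝ → ℝ × ℝ} (hU : ContDiff ℝ (⊤ : ℕ∞) U) :
    ContDiff ℝ (⊤ : ℕ∞) (hillDefect p U) :=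
  (contDiff_deriv (contDiff_deriv hU)).sub (hp.smul hU)

lemma hillDefect_antiperiodic {p : ℝ → ℝ} (hpper : ∀ t, p (t + π) = p t)
    {U : ℝ → ℝ × ℝ} (hUa : ∀ t, U (t + π) = -U t) (t : ℝ) :
    hillDefect p U (t + π) = -hillDefect p U t := by
  simp only [hillDefect, deriv_antiperiodic (deriv_antiperiodic hUa), hpper, hUa, smul_neg]
  abel

lemma continuous_det2 {U V : ℝ → ℝ × ℝ} (hU : Continuous U) (hV : Continuous V) :
    Continuous fun t => det2 (U t) (V t) := by
  unfold det2
  fun_prop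

lemma hasDerivAt_det2 {U V : ℝ → ℝ × ℝ} {U' V' : ℝ × ℝ} {t : ℝ}
    (hU : HasDerivAt U U' t) (hV : HasDerivAt V V' t) :
    HasDerivAt (fun s => det2 (U s) (V s)) (det2 U' (V t) + det2 (U t) V') t := by
  have hU1 : HasDerivAt (fun s => (U s).1) U'.1 t := by simpa using hU.hasFDerivAt.fst.hasDerivAt
  have hU2 : HasDerivAt (fun s => (U s).2) U'.2 t := by simpa using hU.hasFDerivAt.snd.hasDerivAt
  have hV1 : HasDerivAt (fun s => (V s).1) V'.1 t := by simpa using hV.hasFDerivAt.fst.hasDerivAt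
  have hV2 : HasDerivAt (fun s => (V s).2) V'.2 t := by simpa using hV.hasFDerivAt.snd.hasDerivAt
  have h := (hU1.mul hV2).sub (hU2.mul hV1)
  refine h.congr_deriv ?_
  simp only [det2]
  ring

/-- Integration by parts; the boundary terms cancel because `[U', V]` is π-periodic. -/
lemma Omega_eq_neg_integral {p : ℝ → ℝ} (hp : ContDiff ℝ (⊤ : ℕ∞) p)
    {U V : ℝ → ℝ × ℝ} (hU : ContDiff ℝ (⊤ : ℕ∞) U) (hUa : ∀ t, U (t + π) = -U t)
    (hV : ContDiff ℝ (⊤ : ℕ∞) V) (hVa : ∀ t, V (t + π) = -V t) :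
    ∫ t in (0:ℝ)..π, (det2 (deriv U t) (deriv V t) + p t * det2 (U t) (V t)) =
      -∫ t in (0:ℝ)..π, det2 (hillDefect p U t) (V t) := by
  have hU' := contDiff_deriv hU
  have hU'' := contDiff_deriv hU'
  have hV' := contDiff_deriv hV
  have hcont : Continuous fun t =>
      det2 (deriv (deriv U) t) (V t) + det2 (deriv U t) (deriv V t) :=
    (continuous_det2 hU''.continuous hV.continuous).add
      (continuous_det2 hU'.continuous hV'.continuous)
  have hW := continuous_det2 (contDiff_hillDefect hp hU).continuous hV.continuous
  have hparts : ∫ t in (0:ℝ)..π,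
      (det2 (deriv (deriv U) t) (V t) + det2 (deriv U t) (deriv V t)) = 0 := by
    rw [intervalIntegral.integral_eq_sub_of_hasDerivAt
      (fun t _ => hasDerivAt_det2
        ((hU'.differentiable (by simp)) t).hasDerivAt
        ((hV.differentiable (by simp)) t).hasDerivAt)
      (hcont.intervalIntegrable _ _)]
    have h1 := deriv_antiperiodic hUa 0
    have h2 := hVa 0
    rw [zero_add] at h1 h2
    simp [det2, h1, h2]
  have hsplit : ∀ t, det2 (deriv U t) (deriv V t) + p t * det2 (U t) (V t) =
      (det2 (deriv (deriv U) t) (V t) + det2 (deriv U t) (deriv V t)) -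
        det2 (hillDefect p U t) (V t) := by
    intro t
    simp only [det2, hillDefect, Prod.fst_sub, Prod.snd_sub, Prod.smul_fst, Prod.smul_snd,
      smul_eq_mul]
    ring
  simp_rw [hsplit]
  rw [intervalIntegral.integral_sub (hcont.intervalIntegrable _ _) (hW.intervalIntegrable _ _),
    hparts, zero_sub]

/-- The kernel of the second pre-symplectic form
`Ω(U, V) = ∫₀^π ([U', V'] + p[U, V]) dt` on π-anti-periodic fields consists of
the solutions of the Hill equation `U'' = pU`. -/
theorem Omega_kernel (p : ℝ → ℝ) (hp : ContDiff ℝ (⊤ : ℕ∞) p)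
    (hpper : ∀ t, p (t + π) = p t)
    (U : ℝ → ℝ × ℝ) (hU : ContDiff ℝ (⊤ : ℕ∞) U) (hUa : ∀ t, U (t + π) = -U t) :
    (∀ V : ℝ → ℝ × ℝ, ContDiff ℝ (⊤ : ℕ∞) V → (∀ t, V (t + π) = -V t) →
      ∫ t in (0:ℝ)..π, (det2 (deriv U t) (deriv V t) + p t * det2 (U t) (V t)) = 0) ↔
    (∀ t, deriv (deriv U) t = p t • U t) := by
  constructor
  · intro h t
    have hW := contDiff_hillDefect hp hU
    have hWa := hillDefect_antiperiodic hpper hUa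
    set W := hillDefect p U with hWdef
    -- The test field is `W` rotated by a quarter turn.
    have hV : ContDiff ℝ (⊤ : ℕ∞) fun s => (-(W s).2, (W s).1) := hW.snd.neg.prodMk hW.fst
    have hVa : ∀ s, (-(W (s + π)).2, (W (s + π)).1) = -(-(W s).2, (W s).1) := by
      intro s
      simp [hWa]
    have h0 := h _ hV hVa
    rw [Omega_eq_neg_integral hp hU hUa hV hVa, neg_eq_zero] at h0
    have hdet : ∀ s, det2 (hillDefect p U s) (-(W s).2, (W s).1) = (W s).1 ^ 2 + (W s).2 ^ 2 := by
      intro s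
      simp only [det2, ← hWdef]
      ring
    simp_rw [hdet] at h0
    have hper : Function.Periodic (fun s => (W s).1 ^ 2 + (W s).2 ^ 2) π := by
      intro s
      simp [hWa]
    -- Shifting the period to start at `t` gives the vanishing at `t` directly.
    have ht := hper.intervalIntegral_add_eq t 0
    rw [zero_add, h0] at ht
    have hzero : (W t).1 ^ 2 + (W t).2 ^ 2 = 0 := by
      by_contra hne
      have hWc := hW.continuous
      have hpos : 0 < ∫ s in t..t + π, ((W s).1 ^ 2 + (W s).2 ^ 2) :=
        intervalIntegral.integral_pos (by linarith [pi_pos])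
          (Continuous.continuousOn (by fun_prop)) (fun s _ => by positivity)
          ⟨t, ⟨le_rfl, by linarith [pi_pos]⟩, lt_of_le_of_ne (by positivity) (Ne.symm hne)⟩
      exact hpos.ne' ht
    have h1 : (W t).1 = 0 := by nlinarith [sq_nonneg (W t).1, sq_nonneg (W t).2]
    have h2 : (W t).2 = 0 := by nlinarith [sq_nonneg (W t).1, sq_nonneg (W t).2]
    exact sub_eq_zero.1 (Prod.ext h1 h2 : W t = 0)
  · intro h V hV hVa
    rw [Omega_eq_neg_integral hp hU hUa hV hVa]
    simp [hillDefect, h, det2]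
end

section
/- Let γ : ℝ → ℝ be smooth with γ'(t) > 0 for all t, and set Γ₁ := (γ')^{−1/2}, Γ₂ := (γ')^{−1/2}·γ. For smooth u, v : ℝ → ℝ define U := (−½u'Γ₁³, −½u'Γ₁²Γ₂ + uΓ₁) and V := (−½v'Γ₁³, −½v'Γ₁²Γ₂ + vΓ₁). Then for all t: [U(t), V(t)] = ½·(u(t)v'(t) − u'(t)v(t))/γ'(t)². (Hence the centro-affine form ω equals ½ω', where ω'(u, v) = ∫ (uv' − u'v)/(γ')² dt.) -/
open Real

/-- In terms of the projective curve `γ` with lift `Γ = ((γ')^{-1/2}, (γ')^{-1/2}γ)`,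
the centro-affine symplectic density satisfies
`[U, V] = ½ (uv' − u'v)/(γ')²`, i.e. `ω = ½ω'`. -/
theorem omega_is_half_omega' (γ : ℝ → ℝ) (hγ : ContDiff ℝ (⊤ : ℕ∞) γ)
    (hpos : ∀ t, 0 < deriv γ t)
    (u v : ℝ → ℝ) (hu : ContDiff ℝ (⊤ : ℕ∞) u) (hv : ContDiff ℝ (⊤ : ℕ∞) v)
    (Γ₁ Γ₂ : ℝ → ℝ)
    (hΓ₁ : ∀ t, Γ₁ t = (Real.sqrt (deriv γ t))⁻¹)
    (hΓ₂ : ∀ t, Γ₂ t = (Real.sqrt (deriv γ t))⁻¹ * γ t)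
    (U V : ℝ → ℝ × ℝ)
    (hU : ∀ t, U t = (-(1/2) * deriv u t * (Γ₁ t)^3,
        -(1/2) * deriv u t * (Γ₁ t)^2 * Γ₂ t + u t * Γ₁ t))
    (hV : ∀ t, V t = (-(1/2) * deriv v t * (Γ₁ t)^3,
        -(1/2) * deriv v t * (Γ₁ t)^2 * Γ₂ t + v t * Γ₁ t)) :
    ∀ t, det2 (U t) (V t) =
      (1/2) * (u t * deriv v t - deriv u t * v t) / (deriv γ t)^2 := by
  intro t
  -- The `u'v'` terms cancel, leaving `[U, V] = ½ Γ₁⁴ (uv' − u'v)`, and `Γ₁⁴ = (γ')⁻²`.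
  have h4 : ((√(deriv γ t))⁻¹) ^ 4 = ((deriv γ t) ^ 2)⁻¹ := by
    rw [inv_pow, show (4 : ℕ) = 2 * 2 from rfl, pow_mul, Real.sq_sqrt (hpos t).le]
  rw [hU, hV, det2, hΓ₁, hΓ₂, div_eq_mul_inv _ (deriv γ t ^ 2), ← h4]
  ring
end

section
/- Let γ : ℝ → ℝ be smooth with γ'(t) > 0 for all t, set Γ₁ := (γ')^{−1/2}, Γ₂ := (γ')^{−1/2}·γ, and p := Γ₁''/Γ₁. For smooth u, v : ℝ → ℝ define U := (−½u'Γ₁³, −½u'Γ₁²Γ₂ + uΓ₁) and V := (−½v'Γ₁³, −½v'Γ₁²Γ₂ + vΓ₁). Then for all t: [U'(t), V'(t)] + p(t)[U(t), V(t)] = −¼·(u''(t)v'(t) − u'(t)v''(t))/γ'(t)² − ½·d/dt( Γ₁(t)³Γ₁'(t)·(u'(t)v(t) − u(t)v'(t)) ). (Integrating over a period, this gives Ω = −¼Ω', where Ω' is the Kirillov–Kostant–Souriau form Ω'(u,v) = ∫ (u''v' − u'v'')/(γ')² dt.) -/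
/-!
Write `a = Γ₁`, so that `γ' = a⁻²` and `Γ₂ = a γ`. Then `U₂ = U₁ γ + u a`, hence
`U₂' = U₁' γ + ½ u' a + u a'`. In the determinants `[U, V]` and `[U', V']` the multiples of `γ`
cancel, and so do the `u' v'` terms, leaving
`[U, V] = -½ a⁴ (u'v - uv')` and
`[U', V'] = -¼ a⁴ (u''v' - u'v'') - ½ a³a' (u''v - uv'') - (3/2) a²a'² (u'v - uv')`.
Since `p a = a''`, the terms other than the first add up to
`-½ (a³a' (u'v - uv'))'`, and `a⁴ = 1 / γ'²`.
`hasDerivAt_lift_variation` computes `U'`; the rest is polynomial algebra.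
-/

open Real

/-- The derivative of the variation `U` induced by `u`, when `γ' = a⁻²`; the term `½ u' a` comes
from `U₁ γ' + u' a` with `U₁ = -½ u' a³`. -/
theorem hasDerivAt_lift_variation {a γ u u₁ : ℝ → ℝ} {t a' u'' : ℝ} (ha0 : a t ≠ 0)
    (ha : HasDerivAt a a' t) (hγ : HasDerivAt γ ((a t ^ 2)⁻¹) t)
    (hu : HasDerivAt u (u₁ t) t) (hu₁ : HasDerivAt u₁ u'' t) :
    HasDerivAt (fun s => (-(1/2) * u₁ s * a s ^ 3,
        -(1/2) * u₁ s * a s ^ 2 * (a s * γ s) + u s * a s))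
      (-(1/2) * u'' * a t ^ 3 - 3/2 * u₁ t * a t ^ 2 * a',
        (-(1/2) * u'' * a t ^ 3 - 3/2 * u₁ t * a t ^ 2 * a') * γ t
          + 1/2 * u₁ t * a t + u t * a') t := by
  refine HasDerivAt.prodMk ?_ ?_
  · refine ((hu₁.const_mul (-(1/2))).fun_mul (ha.fun_pow 3)).congr_deriv ?_
    push_cast
    ring
  · refine ((((hu₁.const_mul (-(1/2))).fun_mul (ha.fun_pow 2)).fun_mul
      (ha.fun_mul hγ)).fun_add (hu.fun_mul ha)).congr_deriv ?_
    push_cast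
    field_simp
    ring

/-- In terms of the projective curve `γ` with lift `Γ = ((γ')^{-1/2}, (γ')^{-1/2}γ)`
and Hill potential `p = Γ₁''/Γ₁`, the density of the second pre-symplectic form
satisfies `[U', V'] + p[U, V] = −¼(u''v' − u'v'')/(γ')² − ½ d/dt(Γ₁³Γ₁'(u'v − uv'))`,
i.e. `Ω = −¼Ω'` where `Ω'` is the Kirillov–Kostant–Souriau form. -/
theorem Omega_is_quarter_KKS (γ : ℝ → ℝ) (hγ : ContDiff ℝ (⊤ : ℕ∞) γ)
    (hpos : ∀ t, 0 < deriv γ t)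
    (u v : ℝ → ℝ) (hu : ContDiff ℝ (⊤ : ℕ∞) u) (hv : ContDiff ℝ (⊤ : ℕ∞) v)
    (Γ₁ Γ₂ p : ℝ → ℝ)
    (hΓ₁ : ∀ t, Γ₁ t = (Real.sqrt (deriv γ t))⁻¹)
    (hΓ₂ : ∀ t, Γ₂ t = (Real.sqrt (deriv γ t))⁻¹ * γ t)
    (hp : ∀ t, p t = deriv (deriv Γ₁) t / Γ₁ t)
    (U V : ℝ → ℝ × ℝ)
    (hU : ∀ t, U t = (-(1/2) * deriv u t * (Γ₁ t)^3,
        -(1/2) * deriv u t * (Γ₁ t)^2 * Γ₂ t + u t * Γ₁ t))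
    (hV : ∀ t, V t = (-(1/2) * deriv v t * (Γ₁ t)^3,
        -(1/2) * deriv v t * (Γ₁ t)^2 * Γ₂ t + v t * Γ₁ t)) :
    ∀ t, det2 (deriv U t) (deriv V t) + p t * det2 (U t) (V t) =
      -(1/4) * (deriv (deriv u) t * deriv v t - deriv u t * deriv (deriv v) t)
          / (deriv γ t)^2
      - (1/2) * deriv (fun s =>
          Γ₁ s ^ 3 * deriv Γ₁ s * (deriv u s * v s - u s * deriv v s)) t := by
  intro t
  have hdγ : ContDiff ℝ (⊤ : ℕ∞) (deriv γ) := (contDiff_infty_iff_deriv.1 hγ).2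
  have hdu : ContDiff ℝ (⊤ : ℕ∞) (deriv u) := (contDiff_infty_iff_deriv.1 hu).2
  have hdv : ContDiff ℝ (⊤ : ℕ∞) (deriv v) := (contDiff_infty_iff_deriv.1 hv).2
  have ha : ContDiff ℝ (⊤ : ℕ∞) Γ₁ := by
    rw [funext hΓ₁]
    exact (hdγ.sqrt fun s => (hpos s).ne').inv fun s => (Real.sqrt_pos.2 (hpos s)).ne'
  have hda : ContDiff ℝ (⊤ : ℕ∞) (deriv Γ₁) := (contDiff_infty_iff_deriv.1 ha).2
  -- A smooth function has the derivative that `deriv` reports.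
  have D : ∀ {f : ℝ → ℝ}, ContDiff ℝ (⊤ : ℕ∞) f → HasDerivAt f (deriv f t) t := fun hf =>
    ((contDiff_infty_iff_deriv.1 hf).1 t).hasDerivAt
  have ha0 : Γ₁ t ≠ 0 := by
    rw [hΓ₁]
    exact inv_ne_zero (Real.sqrt_pos.2 (hpos t)).ne'
  have hγ' : deriv γ t = (Γ₁ t ^ 2)⁻¹ := by
    rw [hΓ₁, inv_pow, inv_inv, Real.sq_sqrt (hpos t).le]
  have hγd : HasDerivAt γ ((Γ₁ t ^ 2)⁻¹) t := hγ' ▸ D hγ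
  have hΓ₂' : ∀ s, Γ₂ s = Γ₁ s * γ s := fun s => by rw [hΓ₂, hΓ₁]
  simp only [hΓ₂'] at hU hV
  have hdU := hasDerivAt_lift_variation ha0 (D ha) hγd (D hu) (D hdu)
  have hdV := hasDerivAt_lift_variation ha0 (D ha) hγd (D hv) (D hdv)
  rw [← funext hU] at hdU
  rw [← funext hV] at hdV
  have hR := (((D ha).fun_pow 3).fun_mul (D hda)).fun_mul
    (((D hdu).fun_mul (D hv)).fun_sub ((D hu).fun_mul (D hdv)))
  rw [hdU.deriv, hdV.deriv, hR.deriv, hU, hV, hp, hγ']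
  simp only [det2]
  push_cast
  field_simp
  ring
end

section
/- Let c ≠ 0 be real, Γ : ℝ → ℝ² smooth with [Γ(t), Γ'(t)] = 1 for all t, p : ℝ → ℝ smooth with Γ'' = pΓ, and a : ℝ → ℝ smooth with a' = (a² − 1)/c − cp. Set Δ := aΓ + cΓ' and q := p + 2a'/c. Then for all t: (i) Γ(t) = a(t)Δ(t) − cΔ'(t); (ii) Δ''(t) = q(t)Δ(t); (iii) p(t) + q(t) = 2(a(t)² − 1)/c². -/
/-!
Since `Γ'' = pΓ`, differentiating `Δ = aΓ + cΓ'` gives `Δ' = (a' + cp)Γ + aΓ'`, and the Riccati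
equation turns this into `Δ' = ((a² - 1)/c)Γ + aΓ'`. Substitution yields `Γ = aΔ - cΔ'`.
Differentiating `Δ' = (aΔ - Γ)/c` once more, the multiples of `Γ` cancel because
`Γ' = (Δ - aΓ)/c`, which leaves `Δ'' = ((a' + (a² - 1)/c)/c)Δ = qΔ`. The formula for `p + q` is
the Riccati equation rearranged.
-/

open Real

/-- Relations between `Γ`, `Δ = aΓ + cΓ'` and their Hill potentials `p`, `q`:
`Γ = aΔ − cΔ'`, `Δ'' = qΔ`, and `p + q = 2(a² − 1)/c²`. -/
theorem T_c_relations (c : ℝ) (hc : c ≠ 0)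
    (Γ : ℝ → ℝ × ℝ) (hΓ : ContDiff ℝ (⊤ : ℕ∞) Γ)
    (hdet : ∀ t, det2 (Γ t) (deriv Γ t) = 1)
    (p : ℝ → ℝ) (hp : ContDiff ℝ (⊤ : ℕ∞) p)
    (hHill : ∀ t, deriv (deriv Γ) t = p t • Γ t)
    (a : ℝ → ℝ) (ha : ContDiff ℝ (⊤ : ℕ∞) a)
    (hRic : ∀ t, deriv a t = (a t ^ 2 - 1) / c - c * p t)
    (Δ : ℝ → ℝ × ℝ) (hΔ : ∀ t, Δ t = a t • Γ t + c • deriv Γ t)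
    (q : ℝ → ℝ) (hq : ∀ t, q t = p t + 2 * deriv a t / c) :
    (∀ t, Γ t = a t • Δ t - c • deriv Δ t) ∧
    (∀ t, deriv (deriv Δ) t = q t • Δ t) ∧
    (∀ t, p t + q t = 2 * (a t ^ 2 - 1) / c ^ 2) := by
  have hΓd : ∀ t, HasDerivAt Γ (deriv Γ t) t := fun t =>
    (hΓ.differentiable (by simp) t).hasDerivAt
  have hΓ' : ContDiff ℝ (⊤ : ℕ∞) (deriv Γ) := (contDiff_infty_iff_deriv.1 hΓ).2
  have hΓdd : ∀ t, HasDerivAt (deriv Γ) (p t • Γ t) t := fun t => by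
    rw [← hHill t]
    exact (hΓ'.differentiable (by simp) t).hasDerivAt
  have had : ∀ t, HasDerivAt a (deriv a t) t := fun t =>
    (ha.differentiable (by simp) t).hasDerivAt
  have hΔd : ∀ t, HasDerivAt Δ (a t • deriv Γ t + deriv a t • Γ t + c • (p t • Γ t)) t :=
    fun t => by
      rw [funext hΔ]
      exact ((had t).smul (hΓd t)).add ((hΓdd t).const_smul c)
  have h1 : ∀ t, Γ t = a t • Δ t - c • deriv Δ t := fun t => by
    rw [(hΔd t).deriv, hΔ t, hRic t]
    match_scalars <;> field_simp <;> ring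
  have hΔ' : deriv Δ = fun t => c⁻¹ • (a t • Δ t - Γ t) := by
    funext t
    rw [h1 t]
    match_scalars <;> field_simp <;> ring
  refine ⟨h1, fun t => ?_, fun t => ?_⟩
  · have hd := (((had t).smul (hΔd t)).sub (hΓd t)).const_smul c⁻¹
    have hd' := (congrArg (fun f => deriv f t) hΔ').trans hd.deriv
    refine hd'.trans ?_
    rw [hq t, hΔ t, hRic t]
    match_scalars <;> field_simp <;> ring
  · rw [hq t, hRic t]
    field_simp
    ring
end

section
/- Let c ≠ 0 be real, Γ : ℝ → ℝ² smooth with [Γ, Γ'] = 1, p smooth with Γ'' = pΓ, a smooth with a' = (a² − 1)/c − cp, and Δ := aΓ + cΓ'. Let f, g : ℝ → ℝ be smooth, and set U := −½f'Γ + fΓ' and V := −½g'Δ + gΔ'. If [U(t), Δ(t)] + [Γ(t), V(t)] = 0 for all t, then (c/2)(f'(t) + g'(t)) = a(t)(g(t) − f(t)) for all t. -/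
/-!
Since `[Γ, Γ'] = 1`, a determinant `[Γ, W]` reads off the `Γ'`-coefficient of `W`.
From `Γ'' = pΓ` one gets `Δ' = (a' + cp)Γ + aΓ'`, so `[Γ, Δ] = c` and `[Γ, Δ'] = a`.
Hence `[U, Δ] = -(c/2)f' - af` and `[Γ, V] = -(c/2)g' + ag`, and the vanishing of their
sum is the claim.
-/

open Real

/-- If tangent vectors `U = −½f'Γ + fΓ'` at `Γ` and `V = −½g'Δ + gΔ'` at
`Δ = aΓ + cΓ'` are related by the differential of `T_c`
(i.e. `[U, Δ] + [Γ, V] = 0`), then `(c/2)(f' + g') = a(g − f)`. -/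
theorem differential_T_c (c : ℝ) (hc : c ≠ 0)
    (Γ : ℝ → ℝ × ℝ) (hΓ : ContDiff ℝ (⊤ : ℕ∞) Γ)
    (hdet : ∀ t, det2 (Γ t) (deriv Γ t) = 1)
    (p : ℝ → ℝ) (hp : ContDiff ℝ (⊤ : ℕ∞) p)
    (hHill : ∀ t, deriv (deriv Γ) t = p t • Γ t)
    (a : ℝ → ℝ) (ha : ContDiff ℝ (⊤ : ℕ∞) a)
    (hRic : ∀ t, deriv a t = (a t ^ 2 - 1) / c - c * p t)
    (Δ : ℝ → ℝ × ℝ) (hΔ : ∀ t, Δ t = a t • Γ t + c • deriv Γ t)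
    (f g : ℝ → ℝ) (hf : ContDiff ℝ (⊤ : ℕ∞) f) (hg : ContDiff ℝ (⊤ : ℕ∞) g)
    (U V : ℝ → ℝ × ℝ)
    (hU : ∀ t, U t = (-(1/2) * deriv f t) • Γ t + f t • deriv Γ t)
    (hV : ∀ t, V t = (-(1/2) * deriv g t) • Δ t + g t • deriv Δ t)
    (hrel : ∀ t, det2 (U t) (Δ t) + det2 (Γ t) (V t) = 0) :
    ∀ t, c / 2 * (deriv f t + deriv g t) = a t * (g t - f t) := by
  intro t
  have hΓd : HasDerivAt Γ (deriv Γ t) t :=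
    (hΓ.differentiable (by simp) t).hasDerivAt
  have hΓ2 : HasDerivAt (deriv Γ) (p t • Γ t) t := by
    rw [← hHill t]
    exact ((contDiff_infty_iff_deriv.1 hΓ).2.differentiable (by simp) t).hasDerivAt
  have had : HasDerivAt a (deriv a t) t :=
    (ha.differentiable (by simp) t).hasDerivAt
  have hΔd : deriv Δ t = (a t • deriv Γ t + deriv a t • Γ t) + c • (p t • Γ t) := by
    rw [funext hΔ]
    exact ((had.smul hΓd).add (hΓ2.const_smul c)).deriv
  have h := hrel t
  have hd := hdet t
  rw [hU, hV, hΔd, hΔ] at h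
  simp only [det2, Prod.fst_add, Prod.snd_add, Prod.smul_fst, Prod.smul_snd,
    smul_eq_mul] at h hd
  -- By bilinearity, `h` reads `(a (g - f) - c / 2 * (f' + g')) * [Γ, Γ'] = 0`.
  linear_combination (-1) * h +
    (a t * (g t - f t) - c / 2 * (deriv f t + deriv g t)) * hd
end

section
/- Let c ≠ 0 be real and let a, p, q, f₁, f₂, g₁, g₂ : ℝ → ℝ be smooth π-periodic functions such that q − p = 2a'/c, p + q = 2(a² − 1)/c², and (c/2)(fᵢ' + gᵢ') = a·(gᵢ − fᵢ) for i = 1, 2 and all t. Then ∫₀^π [¼(f₁'f₂'' − f₁''f₂') + p(f₁f₂' − f₁'f₂)] dt = ∫₀^π [¼(g₁'g₂'' − g₁''g₂') + q(g₁g₂' − g₁'g₂)] dt. (This is the invariance T_c*(Ω) = Ω of the second pre-symplectic form under the transformation T_c.) -/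
open Real

/-!
Put `b = 2a/c`, `uᵢ = gᵢ - fᵢ`, `sᵢ = gᵢ + fᵢ`, so that `sᵢ' = b uᵢ`, and let
`K = (p + q)/2 = b²/4 - 1/c²`, so that `K' = b b'/2 = b (q - p)/2`.  With `M = s₁u₂ - u₁s₂` and
`N = u₁u₂' - u₁'u₂`, the relation `sᵢ' = b uᵢ` gives `M' = s₁u₂' - u₁'s₂`, and the integrand
for `(g, q)` minus the integrand for `(f, p)` becomes
`(K M' + K' M)/2 + (b N' + b' N)/8 = (K M/2 + b N/8)'`.
The integrands thus differ by the derivative of a π-periodic function, and the integral of such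
a derivative over a period vanishes.  In the proof the primitive is written in terms of
`a, c, fᵢ, gᵢ`, using `M = 2 (f₁g₂ - g₁f₂)`.
-/

private lemma smooth_deriv {f : ℝ → ℝ} (hf : ContDiff ℝ (⊤ : ℕ∞) f) :
    ContDiff ℝ (⊤ : ℕ∞) (deriv f) :=
  (contDiff_infty_iff_deriv.1 hf).2

private lemma smooth_hasDerivAt {f : ℝ → ℝ} (hf : ContDiff ℝ (⊤ : ℕ∞) f) (t : ℝ) :
    HasDerivAt f (deriv f t) t :=
  ((contDiff_infty_iff_deriv.1 hf).1 t).hasDerivAt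

private lemma deriv_at_period {f : ℝ → ℝ} (hf : ∀ t, f (t + π) = f t) :
    deriv f π = deriv f 0 := by
  have h := deriv_comp_add_const f π 0
  rw [funext hf, zero_add] at h
  exact h.symm

/-- The relation `(c/2)(f' + g') = a(g - f)`, differentiated once. -/
private lemma rel_deriv {c : ℝ} {a f g : ℝ → ℝ} (ha : ContDiff ℝ (⊤ : ℕ∞) a)
    (hf : ContDiff ℝ (⊤ : ℕ∞) f) (hg : ContDiff ℝ (⊤ : ℕ∞) g)
    (hrel : ∀ t, c / 2 * (deriv f t + deriv g t) = a t * (g t - f t)) (t : ℝ) :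
    c / 2 * (deriv (deriv f) t + deriv (deriv g) t)
      = deriv a t * (g t - f t) + a t * (deriv g t - deriv f t) := by
  have h1 := ((smooth_hasDerivAt (smooth_deriv hf) t).add
    (smooth_hasDerivAt (smooth_deriv hg) t)).const_mul (c / 2)
  have h2 := (smooth_hasDerivAt ha t).mul ((smooth_hasDerivAt hg t).sub (smooth_hasDerivAt hf t))
  refine h1.unique (h2.congr_of_eventuallyEq (Filter.Eventually.of_forall fun x => ?_))
  simpa using hrel x

/-- Invariance `T_c*(Ω) = Ω` of the second pre-symplectic form: if `q − p = 2a'/c`,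
`p + q = 2(a² − 1)/c²`, and pairs of π-periodic functions `(fᵢ, gᵢ)` satisfy
`(c/2)(fᵢ' + gᵢ') = a(gᵢ − fᵢ)`, then
`∫₀^π [¼(f₁'f₂'' − f₁''f₂') + p(f₁f₂' − f₁'f₂)] dt
  = ∫₀^π [¼(g₁'g₂'' − g₁''g₂') + q(g₁g₂' − g₁'g₂)] dt`. -/
theorem Omega_invariant (c : ℝ) (hc : c ≠ 0)
    (a p q f₁ f₂ g₁ g₂ : ℝ → ℝ)
    (ha : ContDiff ℝ (⊤ : ℕ∞) a) (hp : ContDiff ℝ (⊤ : ℕ∞) p) (hq : ContDiff ℝ (⊤ : ℕ∞) q)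
    (hf₁ : ContDiff ℝ (⊤ : ℕ∞) f₁) (hf₂ : ContDiff ℝ (⊤ : ℕ∞) f₂)
    (hg₁ : ContDiff ℝ (⊤ : ℕ∞) g₁) (hg₂ : ContDiff ℝ (⊤ : ℕ∞) g₂)
    (haper : ∀ t, a (t + π) = a t)
    (hpper : ∀ t, p (t + π) = p t) (hqper : ∀ t, q (t + π) = q t)
    (hf₁per : ∀ t, f₁ (t + π) = f₁ t) (hf₂per : ∀ t, f₂ (t + π) = f₂ t)
    (hg₁per : ∀ t, g₁ (t + π) = g₁ t) (hg₂per : ∀ t, g₂ (t + π) = g₂ t)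
    (hdiff : ∀ t, q t - p t = 2 * deriv a t / c)
    (hsum : ∀ t, p t + q t = 2 * (a t ^ 2 - 1) / c ^ 2)
    (hrel₁ : ∀ t, c / 2 * (deriv f₁ t + deriv g₁ t) = a t * (g₁ t - f₁ t))
    (hrel₂ : ∀ t, c / 2 * (deriv f₂ t + deriv g₂ t) = a t * (g₂ t - f₂ t)) :
    ∫ t in (0:ℝ)..π,
        ((1/4) * (deriv f₁ t * deriv (deriv f₂) t - deriv (deriv f₁) t * deriv f₂ t)
          + p t * (f₁ t * deriv f₂ t - deriv f₁ t * f₂ t)) =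
      ∫ t in (0:ℝ)..π,
        ((1/4) * (deriv g₁ t * deriv (deriv g₂) t - deriv (deriv g₁) t * deriv g₂ t)
          + q t * (g₁ t * deriv g₂ t - deriv g₁ t * g₂ t)) := by
  have hF : ∀ t ∈ Set.uIcc (0 : ℝ) π, HasDerivAt
      (fun t => (a t ^ 2 - 1) / c ^ 2 * (f₁ t * g₂ t - g₁ t * f₂ t)
        + a t / (4 * c) * ((g₁ t - f₁ t) * (deriv g₂ t - deriv f₂ t)
          - (deriv g₁ t - deriv f₁ t) * (g₂ t - f₂ t)))
      (((1/4) * (deriv g₁ t * deriv (deriv g₂) t - deriv (deriv g₁) t * deriv g₂ t)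
          + q t * (g₁ t * deriv g₂ t - deriv g₁ t * g₂ t))
        - ((1/4) * (deriv f₁ t * deriv (deriv f₂) t - deriv (deriv f₁) t * deriv f₂ t)
          + p t * (f₁ t * deriv f₂ t - deriv f₁ t * f₂ t))) t := by
    intro t _
    have A := smooth_hasDerivAt ha t
    have F₁ := smooth_hasDerivAt hf₁ t
    have F₂ := smooth_hasDerivAt hf₂ t
    have G₁ := smooth_hasDerivAt hg₁ t
    have G₂ := smooth_hasDerivAt hg₂ t
    have F₁' := smooth_hasDerivAt (smooth_deriv hf₁) t
    have F₂' := smooth_hasDerivAt (smooth_deriv hf₂) t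
    have G₁' := smooth_hasDerivAt (smooth_deriv hg₁) t
    have G₂' := smooth_hasDerivAt (smooth_deriv hg₂) t
    have H := ((((A.pow 2).sub_const 1).div_const (c ^ 2)).mul ((F₁.mul G₂).sub (G₁.mul F₂))).add
      ((A.div_const (4 * c)).mul (((G₁.sub F₁).mul (G₂'.sub F₂')).sub
        ((G₁'.sub F₁').mul (G₂.sub F₂))))
    refine H.congr_deriv ?_
    have r₁ := hrel₁ t
    have r₂ := hrel₂ t
    have d₁ := rel_deriv ha hf₁ hg₁ hrel₁ t
    have d₂ := rel_deriv ha hf₂ hg₂ hrel₂ t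
    have hd := hdiff t
    have hs := hsum t
    simp only [Pi.sub_apply, Pi.mul_apply, Pi.pow_apply]
    -- Solve the relations for `p, q, gᵢ', gᵢ''`; what remains is a rational identity.
    have eq : q t = (a t ^ 2 - 1) / c ^ 2 + deriv a t / c := by linear_combination (hd + hs) / 2
    have ep : p t = (a t ^ 2 - 1) / c ^ 2 - deriv a t / c := by linear_combination (hs - hd) / 2
    have e₁ : deriv g₁ t = 2 / c * (a t * (g₁ t - f₁ t)) - deriv f₁ t := by
      rw [← r₁]; field_simp; ring
    have e₂ : deriv g₂ t = 2 / c * (a t * (g₂ t - f₂ t)) - deriv f₂ t := by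
      rw [← r₂]; field_simp; ring
    have k₁ : deriv (deriv g₁) t = 2 / c * (deriv a t * (g₁ t - f₁ t)
        + a t * (deriv g₁ t - deriv f₁ t)) - deriv (deriv f₁) t := by
      rw [← d₁]; field_simp; ring
    have k₂ : deriv (deriv g₂) t = 2 / c * (deriv a t * (g₂ t - f₂ t)
        + a t * (deriv g₂ t - deriv f₂ t)) - deriv (deriv f₂) t := by
      rw [← d₂]; field_simp; ring
    rw [k₁, k₂, e₁, e₂, eq, ep]
    field_simp
    ring
  have ca := ha.continuous
  have cp := hp.continuous
  have cq := hq.continuous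
  have cf₁ := hf₁.continuous
  have cf₂ := hf₂.continuous
  have cg₁ := hg₁.continuous
  have cg₂ := hg₂.continuous
  have cf₁' := (smooth_deriv hf₁).continuous
  have cf₂' := (smooth_deriv hf₂).continuous
  have cg₁' := (smooth_deriv hg₁).continuous
  have cg₂' := (smooth_deriv hg₂).continuous
  have cf₁'' := (smooth_deriv (smooth_deriv hf₁)).continuous
  have cf₂'' := (smooth_deriv (smooth_deriv hf₂)).continuous
  have cg₁'' := (smooth_deriv (smooth_deriv hg₁)).continuous
  have cg₂'' := (smooth_deriv (smooth_deriv hg₂)).continuous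
  have hI := intervalIntegral.integral_eq_sub_of_hasDerivAt hF
    (Continuous.intervalIntegrable (by fun_prop) _ _)
  rw [intervalIntegral.integral_sub (Continuous.intervalIntegrable (by fun_prop) _ _)
    (Continuous.intervalIntegrable (by fun_prop) _ _)] at hI
  have z : ∀ {h : ℝ → ℝ}, (∀ t, h (t + π) = h t) → h π = h 0 := fun hh => by
    simpa using hh 0
  rw [deriv_at_period hf₁per, deriv_at_period hf₂per, deriv_at_period hg₁per,
    deriv_at_period hg₂per, z haper, z hf₁per, z hf₂per, z hg₁per, z hg₂per, sub_self] at hI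
  exact (sub_eq_zero.1 hI).symm
end

section
/- Let c ≠ 0 be real, Γ = (Γ₁, Γ₂) : ℝ → ℝ² smooth with [Γ(t), Γ'(t)] = 1 and Γ(t + π) = −Γ(t) for all t, and p : ℝ → ℝ smooth with Γ'' = pΓ. Let a : ℝ → ℝ be smooth and π-periodic with a' = (a² − 1)/c − cp, and set Δ = (Δ₁, Δ₂) := aΓ + cΓ'. Then ∫₀^π Δ₁(t)² dt = ∫₀^π Γ₁(t)² dt, ∫₀^π Δ₁(t)Δ₂(t) dt = ∫₀^π Γ₁(t)Γ₂(t) dt, and ∫₀^π Δ₂(t)² dt = ∫₀^π Γ₂(t)² dt. (The functionals I, J, K are integrals of the transformations T_c.) -/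
/-!
For two components `x`, `y` of `Γ` (possibly equal), the Riccati equation in the form
`a² = 1 + c a' + c² p` and the Hill equations `x'' = p x`, `y'' = p y` give
`(a x + c x') (a y + c y') - x y = (c a x y + c² x y')'`.
The function being differentiated is `π`-periodic, since `a` is `π`-periodic and `x`, `y`, `y'`
are `π`-antiperiodic. Integrating over `[0, π]` yields the three identities; this is
`integral_transform_mul_eq`.
-/

open Real

/-- The common form of the three identities: `x`, `y` are components of the curve, `u`, `v` their
derivatives. Only the values at `0` and `π` enter from the (anti)periodicity conditions. -/
lemma integral_transform_mul_eq {c : ℝ} (hc : c ≠ 0) {a p x y u v : ℝ → ℝ}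
    (ha : ∀ t, HasDerivAt a ((a t ^ 2 - 1) / c - c * p t) t)
    (hx : ∀ t, HasDerivAt x (u t) t) (hu : Continuous u)
    (hy : ∀ t, HasDerivAt y (v t) t) (hv : ∀ t, HasDerivAt v (p t * y t) t)
    (haπ : a π = a 0) (hxπ : x π = -x 0) (hyπ : y π = -y 0) (hvπ : v π = -v 0) :
    ∫ t in (0:ℝ)..π, (a t * x t + c * u t) * (a t * y t + c * v t) =
      ∫ t in (0:ℝ)..π, x t * y t := by
  have hac : Continuous a := continuous_iff_continuousAt.2 fun t => (ha t).continuousAt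
  have hxc : Continuous x := continuous_iff_continuousAt.2 fun t => (hx t).continuousAt
  have hyc : Continuous y := continuous_iff_continuousAt.2 fun t => (hy t).continuousAt
  have hvc : Continuous v := continuous_iff_continuousAt.2 fun t => (hv t).continuousAt
  have hΔi : Continuous fun t => (a t * x t + c * u t) * (a t * y t + c * v t) := by fun_prop
  have hΓi : Continuous fun t => x t * y t := by fun_prop
  have hF : ∀ t, HasDerivAt (fun t => c * (a t * (x t * y t)) + c ^ 2 * (x t * v t))
      ((a t * x t + c * u t) * (a t * y t + c * v t) - x t * y t) t := by
    intro t
    refine ((((ha t).mul ((hx t).mul (hy t))).const_mul c).add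
      (((hx t).mul (hv t)).const_mul (c ^ 2))).congr_deriv ?_
    simp only [Pi.mul_apply]
    field_simp
    ring
  have hFTC := intervalIntegral.integral_eq_sub_of_hasDerivAt (a := 0) (b := π)
    (fun t _ => hF t) ((hΔi.sub hΓi).intervalIntegrable _ _)
  rw [intervalIntegral.integral_sub (hΔi.intervalIntegrable _ _) (hΓi.intervalIntegrable _ _),
    haπ, hxπ, hyπ, hvπ] at hFTC
  linear_combination hFTC

/-- The functionals `I = ∫₀^π Γ₁²`, `J = ∫₀^π Γ₁Γ₂`, `K = ∫₀^π Γ₂²` are integrals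
of the transformation `T_c : Γ ↦ Δ = aΓ + cΓ'`. -/
theorem IJK_invariant (c : ℝ) (hc : c ≠ 0)
    (Γ : ℝ → ℝ × ℝ) (hΓ : ContDiff ℝ (⊤ : ℕ∞) Γ)
    (hdet : ∀ t, det2 (Γ t) (deriv Γ t) = 1)
    (hanti : ∀ t, Γ (t + π) = -Γ t)
    (p : ℝ → ℝ) (hp : ContDiff ℝ (⊤ : ℕ∞) p)
    (hHill : ∀ t, deriv (deriv Γ) t = p t • Γ t)
    (a : ℝ → ℝ) (ha : ContDiff ℝ (⊤ : ℕ∞) a) (haper : ∀ t, a (t + π) = a t)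
    (hRic : ∀ t, deriv a t = (a t ^ 2 - 1) / c - c * p t)
    (Δ : ℝ → ℝ × ℝ) (hΔ : ∀ t, Δ t = a t • Γ t + c • deriv Γ t) :
    (∫ t in (0:ℝ)..π, ((Δ t).1) ^ 2 = ∫ t in (0:ℝ)..π, ((Γ t).1) ^ 2) ∧
    (∫ t in (0:ℝ)..π, (Δ t).1 * (Δ t).2 = ∫ t in (0:ℝ)..π, (Γ t).1 * (Γ t).2) ∧
    (∫ t in (0:ℝ)..π, ((Δ t).2) ^ 2 = ∫ t in (0:ℝ)..π, ((Γ t).2) ^ 2) := by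
  have hΓd : ∀ t, HasDerivAt Γ (deriv Γ t) t := fun t =>
    ((hΓ.differentiable (by simp)) t).hasDerivAt
  have hΓ' : ContDiff ℝ (⊤ : ℕ∞) (deriv Γ) := (contDiff_infty_iff_deriv.1 hΓ).2
  have hΓdd : ∀ t, HasDerivAt (deriv Γ) (p t • Γ t) t := fun t => by
    rw [← hHill t]
    exact ((hΓ'.differentiable (by simp)) t).hasDerivAt
  have had : ∀ t, HasDerivAt a ((a t ^ 2 - 1) / c - c * p t) t := fun t => by
    rw [← hRic t]
    exact ((ha.differentiable (by simp)) t).hasDerivAt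
  have haπ : a π = a 0 := by simpa using haper 0
  have hΓπ : Γ π = -Γ 0 := by simpa using hanti 0
  -- Differentiating the antiperiodicity relation shows that `Γ'` is antiperiodic as well.
  have hΓ'π : deriv Γ π = -deriv Γ 0 := by
    have h : deriv (fun t => Γ (t + π)) 0 = deriv (fun t => -Γ t) 0 := by simp only [hanti]
    rw [deriv_comp_add_const, deriv.fun_neg] at h
    simpa using h
  have hx : ∀ t, HasDerivAt (fun s => (Γ s).1) (deriv Γ t).1 t := fun t => (hΓd t).fst
  have hy : ∀ t, HasDerivAt (fun s => (Γ s).2) (deriv Γ t).2 t := fun t => (hΓd t).snd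
  have hu : ∀ t, HasDerivAt (fun s => (deriv Γ s).1) (p t * (Γ t).1) t :=
    fun t => (hΓdd t).fst
  have hv : ∀ t, HasDerivAt (fun s => (deriv Γ s).2) (p t * (Γ t).2) t :=
    fun t => (hΓdd t).snd
  have huc : Continuous fun s => (deriv Γ s).1 := continuous_fst.comp hΓ'.continuous
  have hvc : Continuous fun s => (deriv Γ s).2 := continuous_snd.comp hΓ'.continuous
  have h1 : ∀ t, (Δ t).1 = a t * (Γ t).1 + c * (deriv Γ t).1 := fun t => by simp [hΔ]
  have h2 : ∀ t, (Δ t).2 = a t * (Γ t).2 + c * (deriv Γ t).2 := fun t => by simp [hΔ]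
  simp only [h1, h2, pow_two]
  refine ⟨?_, ?_, ?_⟩
  · exact integral_transform_mul_eq hc had hx huc hx hu haπ (by simp [hΓπ]) (by simp [hΓπ])
      (by simp [hΓ'π])
  · exact integral_transform_mul_eq hc had hx huc hy hv haπ (by simp [hΓπ]) (by simp [hΓπ])
      (by simp [hΓ'π])
  · exact integral_transform_mul_eq hc had hy hvc hy hv haπ (by simp [hΓπ]) (by simp [hΓπ])
      (by simp [hΓ'π])
end

section
/- Let γ, γ₁, γ₂, μ, ν be real numbers with μ ≠ 0, ν ≠ 0 and 1/μ + 1/ν = 1. Then (1/μ)·[[γ − μγ₂, γγ₂(μ − 1)], [1 − μ, γμ − γ₂]]·(γ₁, 1)ᵀ = (1/ν)·[[γ − νγ₁, γγ₁(ν − 1)], [1 − ν, γν − γ₁]]·(γ₂, 1)ᵀ, as an equality of vectors in ℝ². (This identity is the key step in Bianchi permutability: it shows A_{μ,γ,γ₂}(γ₁(0)) = A_{ν,γ,γ₁}(γ₂(0)), producing the fourth curve γ₁₂ with γ₁ ∼_{c₂} γ₁₂ and γ₂ ∼_{c₁} γ₁₂.) -/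
open Real

/-- The key algebraic identity in the proof of Bianchi permutability: if
`1/μ + 1/ν = 1`, then
`(1/μ)·A_{μ,γ,γ₂}·(γ₁, 1)ᵀ = (1/ν)·A_{ν,γ,γ₁}·(γ₂, 1)ᵀ`
(with the common factor `1/(γ − γᵢ)` removed). -/
theorem bianchi_permutability_key (γ γ₁ γ₂ μ ν : ℝ)
    (hμ : μ ≠ 0) (hν : ν ≠ 0) (h : 1 / μ + 1 / ν = 1) :
    (1 / μ) • (!![γ - μ * γ₂, γ * γ₂ * (μ - 1); 1 - μ, γ * μ - γ₂]).mulVec ![γ₁, 1] =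
      (1 / ν) • (!![γ - ν * γ₁, γ * γ₁ * (ν - 1); 1 - ν, γ * ν - γ₁]).mulVec ![γ₂, 1] := by
  have ha : 1 / μ * μ = 1 := one_div_mul_cancel hμ
  have hb : 1 / ν * ν = 1 := one_div_mul_cancel hν
  -- With `a = 1/μ` and `b = 1/ν`, each row of the difference of the two sides is a multiple of
  -- `a + b - 1` once `a * μ = 1` and `b * ν = 1` are used.
  generalize 1 / μ = a at *
  generalize 1 / ν = b at *
  ext i
  fin_cases i
  · simp
    linear_combination γ * (γ₁ - γ₂) * h + γ₂ * (γ - γ₁) * ha - γ₁ * (γ - γ₂) * hb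
  · simp
    linear_combination (γ₁ - γ₂) * h + (γ - γ₁) * ha - (γ - γ₂) * hb
end
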